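/- If A is a thin set of natural numbers with 1 ∉ A, then the set of multiples M(A) possesses an asymptotic density, and this density is strictly less than 1. -/

import Mathlib

open Filter

open scoped Classical in
noncomputable def countIn (A : Set ℕ) (x : ℕ) : ℕ :=
  ((Finset.Icc 1 x).filter (fun n => n ∈ A)).card

/-- `A ⊆ ℕ` has asymptotic density `δ`. -/
def HasDensity (A : Set ℕ) (δ : ℝ) : Prop :=
  Tendsto (fun x : ℕ => (countIn A x : ℝ) / x) atTop (nhds δ)

/-- `A` is thin: `∑_{a ∈ A} 1/a < ∞`. -/
def Thin (A : Set ℕ) : Prop := Summable (fun a : A => (1 : ℝ) / a)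

/-- The set of multiples of `A`: positive integers with at least one divisor in `A`. -/
def setOfMultiples (A : Set ℕ) : Set ℕ := {n : ℕ | 0 < n ∧ ∃ a ∈ A, a ∣ n}

/-!
Write `M A` for the set of multiples of `A`. If `F` is finite then `M F` is periodic, so it has a
density. Since at most `x * ∑ 1 / a` integers up to `x` have a divisor in a thin set, the finite
truncations `M (A ∩ s)` approximate `M A` uniformly, and `M A` has a density: the limit of the
densities of the truncations.

For the strict inequality, thinness and `1 ∉ A` provide `L` such that the reciprocals of the
elements of `A` coprime to `L` add up to `σ < 1`. Divisors of an integer `n ≡ 1 [MOD L]` are coprime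
to `L`, so every truncation covers at most the proportion `σ` of this residue class, and its density
is at most `1 - (1 - σ) / L`, uniformly in the truncation.
-/

variable {A B : Set ℕ} {α β δ : ℝ} {L x : ℕ}

lemma countIn_mono (h : ∀ n ∈ Finset.Icc 1 x, n ∈ A → n ∈ B) : countIn A x ≤ countIn B x := by
  classical
  refine Finset.card_le_card fun n hn => ?_
  rw [Finset.mem_filter] at hn ⊢
  exact ⟨hn.1, h n hn.1 hn.2⟩

lemma countIn_le (A : Set ℕ) (x : ℕ) : countIn A x ≤ x := by
  classical
  exact (Finset.card_filter_le _ _).trans_eq (Nat.card_Icc 1 x)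

lemma countIn_union_add_countIn_inter (A B : Set ℕ) (x : ℕ) :
    countIn (A ∪ B) x + countIn (A ∩ B) x = countIn A x + countIn B x := by
  classical
  simp only [countIn, Set.mem_union, Set.mem_inter_iff, Finset.filter_or, Finset.filter_and]
  exact Finset.card_union_add_card_inter _ _

lemma countIn_biUnion_le {ι : Type*} (s : Finset ι) (S : ι → Set ℕ) (x : ℕ) :
    countIn (⋃ i ∈ s, S i) x ≤ ∑ i ∈ s, countIn (S i) x := by
  classical
  refine (Finset.card_le_card fun n hn => ?_).trans Finset.card_biUnion_le
  simp only [Finset.mem_filter, Finset.mem_biUnion, Set.mem_iUnion₂] at hn ⊢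
  obtain ⟨hn, i, hi, hni⟩ := hn
  exact ⟨i, hi, hn, hni⟩

lemma countIn_dvd (a x : ℕ) : countIn {n | a ∣ n} x = x / a := by
  simp only [countIn, Set.mem_ofPred_eq]
  convert Nat.Ioc_filter_dvd_card_eq_div x a
  rfl

lemma countIn_modEq {r : ℕ} (hr : 0 < r) (v : ℕ) : countIn {n | n ≡ v [MOD r]} r = 1 := by
  have hperiodic : Function.Periodic (fun n => n ≡ v [MOD r]) r := fun n => by simp [Nat.ModEq]
  have hcount := Nat.filter_Ico_card_eq_of_periodic 1 r (· ≡ v [MOD r]) hperiodic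
  rw [Nat.count_modEq_card _ hr, Nat.div_self hr, Nat.mod_self, if_neg (Nat.not_lt_zero _),
    add_comm 1 r, Finset.Ico_add_one_right_eq_Icc] at hcount
  simp only [countIn, Set.mem_ofPred_eq]
  convert hcount

open scoped Classical in
lemma countIn_eq_count (A : Set ℕ) (x : ℕ) : countIn A x = Nat.count (fun n => n + 1 ∈ A) x := by
  have hshift : Finset.Icc 1 x = (Finset.range x).map (addRightEmbedding 1) := by
    rw [Finset.range_eq_Ico, Finset.map_add_right_Ico, zero_add, Finset.Ico_add_one_right_eq_Icc]
  rw [countIn, hshift, Finset.filter_map, Finset.card_map, Nat.count_eq_card_filter_range]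
  rfl

lemma countIn_monotone (A : Set ℕ) : Monotone (countIn A) := by
  classical
  rw [funext (countIn_eq_count A)]
  exact Nat.count_monotone _

lemma countIn_mul_of_periodic (hA : ∀ n > 0, L + n ∈ A ↔ n ∈ A) (q : ℕ) :
    countIn A (q * L) = q * countIn A L := by
  classical
  simp only [countIn_eq_count]
  induction q with
  | zero => simp
  | succ q ih =>
    have hshift (k : ℕ) : L + k + 1 ∈ A ↔ k + 1 ∈ A := hA (k + 1) k.succ_pos
    simp only [Nat.succ_mul, Nat.add_comm (q * L), Nat.count_add, hshift, ih]
    ring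

lemma HasDensity.mono (hA : HasDensity A α) (hB : HasDensity B β) (h : A ⊆ B) : α ≤ β := by
  refine le_of_tendsto_of_tendsto' hA hB fun x => ?_
  gcongr
  exact countIn_mono fun n _ hn => h hn

lemma hasDensity_of_periodic (hL : 0 < L) (hA : ∀ n > 0, L + n ∈ A ↔ n ∈ A) :
    HasDensity A (countIn A L / L) := by
  set c := countIn A L
  have hL' : (0 : ℝ) < L := by exact_mod_cast hL
  refine tendsto_iff_dist_tendsto_zero.2 <| squeeze_zero' (.of_forall fun _ => dist_nonneg) ?_
    (tendsto_const_div_atTop_nhds_zero_nat (c : ℝ))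
  filter_upwards [eventually_gt_atTop 0] with x hx
  have hx' : (0 : ℝ) < x := by exact_mod_cast hx
  set q := x / L
  have hx_lt : x < (q + 1) * L := by
    rw [mul_comm]
    exact Nat.lt_mul_div_succ x hL
  have hcount_ge : (q * c : ℝ) ≤ countIn A x := by
    exact_mod_cast (countIn_mul_of_periodic hA q).symm.trans_le
      (countIn_monotone A (Nat.div_mul_le_self x L))
  have hcount_le : (countIn A x : ℝ) ≤ (q + 1) * c := by
    exact_mod_cast (countIn_monotone A hx_lt.le).trans_eq
      (countIn_mul_of_periodic hA (q + 1))
  have hmean_ge : (q * c : ℝ) ≤ x / L * c := by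
    gcongr
    exact Nat.cast_div_le
  have hmean_le : (x / L * c : ℝ) ≤ (q + 1) * c := by
    gcongr
    rw [div_le_iff₀ hL']
    exact_mod_cast hx_lt.le
  have hdist : |(countIn A x : ℝ) - x / L * c| ≤ c := by
    rw [abs_le]
    constructor <;> linarith
  calc |(countIn A x : ℝ) / x - c / L| = |(countIn A x : ℝ) - x / L * c| / x := by
        rw [← abs_of_pos hx', ← abs_div, abs_of_pos hx']
        congr 1
        field_simp
    _ ≤ c / x := by gcongr

lemma hasDensity_modEq {r : ℕ} (hr : 0 < r) (v : ℕ) :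
    HasDensity {n | n ≡ v [MOD r]} (1 / r) := by
  have h := hasDensity_of_periodic (A := {n | n ≡ v [MOD r]}) hr fun n _ => by simp [Nat.ModEq]
  rwa [countIn_modEq hr, Nat.cast_one] at h

lemma hasDensity_modEq_inter_modEq {r s : ℕ} (hr : 0 < r) (hs : 0 < s) (h : r.Coprime s)
    (u v : ℕ) : HasDensity ({n | n ≡ u [MOD r]} ∩ {n | n ≡ v [MOD s]}) (1 / (r * s)) := by
  obtain ⟨w, hwu, hwv⟩ := Nat.chineseRemainder h u v
  have heq : {n | n ≡ u [MOD r]} ∩ {n | n ≡ v [MOD s]} = {n | n ≡ w [MOD r * s]} := by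
    ext n
    rw [Set.mem_ofPred_eq, ← Nat.modEq_and_modEq_iff_modEq_mul h]
    exact and_congr ⟨(·.trans hwu.symm), (·.trans hwu)⟩ ⟨(·.trans hwv.symm), (·.trans hwv)⟩
  rw [heq]
  exact_mod_cast hasDensity_modEq (Nat.mul_pos hr hs) w

lemma HasDensity.add_le_one_add_sum {ι : Type*} {s : Finset ι} {S : ι → Set ℕ} {σ : ι → ℝ}
    (hA : HasDensity A α) (hB : HasDensity B β) (hS : ∀ i ∈ s, HasDensity (S i) (σ i))
    (h : A ∩ B ⊆ ⋃ i ∈ s, S i) : α + β ≤ 1 + ∑ i ∈ s, σ i := by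
  have hone : Tendsto (fun x : ℕ => (x : ℝ) / x) atTop (nhds 1) :=
    tendsto_const_nhds.congr' <| (eventually_ne_atTop 0).mono fun x hx =>
      (div_self (Nat.cast_ne_zero.2 hx)).symm
  refine le_of_tendsto_of_tendsto' (hA.add hB) (hone.add (tendsto_finsetSum s hS)) fun x => ?_
  rw [← add_div, ← Finset.sum_div, ← add_div]
  refine div_le_div_of_nonneg_right ?_ x.cast_nonneg
  norm_cast
  rw [← countIn_union_add_countIn_inter A B x]
  exact add_le_add (countIn_le _ x) ((countIn_mono fun n _ hn => h hn).trans
    (countIn_biUnion_le s S x))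

/-- The sum of the reciprocals of the elements of `A`, meaningful (that is, not a junk `0`) when
`A` is thin. It measures the size of `A` and bounds the proportion of integers having a divisor
in `A`. -/
noncomputable def recipSum (A : Set ℕ) : ℝ := ∑' a : A, (1 : ℝ) / a

lemma recipSum_nonneg (A : Set ℕ) : 0 ≤ recipSum A := tsum_nonneg fun _ => by positivity

lemma Thin.mono (hB : Thin B) (h : A ⊆ B) : Thin A := by
  rw [Thin] at hB ⊢
  simpa only [Function.comp_def, Set.coe_inclusion] using
    hB.comp_injective (Set.inclusion_injective h)

lemma Thin.recipSum_mono (hB : Thin B) (h : A ⊆ B) : recipSum A ≤ recipSum B :=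
  (hB.mono h).tsum_le_tsum_of_inj (Set.inclusion h) (Set.inclusion_injective h)
    (fun _ _ => by positivity) (fun _ => le_rfl) hB

lemma Thin.sum_one_div_le_recipSum (hA : Thin A) {s : Finset ℕ} (hs : ↑s ⊆ A) :
    ∑ a ∈ s, (1 : ℝ) / a ≤ recipSum A :=
  (s.tsum_subtype' fun a : ℕ => (1 : ℝ) / a).symm.trans_le (hA.recipSum_mono hs)

-- If `A` is not thin, neither is any `A \ s`, and every term is the junk value `0`.
lemma tendsto_recipSum_sdiff (A : Set ℕ) :
    Tendsto (fun s : Finset ℕ => recipSum (A \ s)) atTop (nhds 0) := by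
  refine (tendsto_tsum_compl_atTop_zero (A.indicator fun a : ℕ => (1 : ℝ) / a)).congr fun s => ?_
  rw [recipSum, tsum_subtype (A \ s) fun a : ℕ => (1 : ℝ) / a, Set.sdiff_eq, Set.inter_comm,
    ← Set.indicator_indicator]
  exact tsum_subtype (s : Set ℕ)ᶜ _

lemma Thin.countIn_setOfMultiples_le (hA : Thin A) (x : ℕ) :
    countIn (setOfMultiples A) x ≤ x * recipSum A := by
  classical
  set s := {a ∈ Finset.Icc 1 x | a ∈ A}
  have hcover : ∀ n ∈ Finset.Icc 1 x, n ∈ setOfMultiples A → n ∈ ⋃ a ∈ s, {n | a ∣ n} := by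
    rintro n hn ⟨hn0, a, ha, hdvd⟩
    have ha' : a ∈ Finset.Icc 1 x := Finset.mem_Icc.2
      ⟨Nat.pos_of_dvd_of_pos hdvd hn0, (Nat.le_of_dvd hn0 hdvd).trans (Finset.mem_Icc.1 hn).2⟩
    exact Set.mem_biUnion (Finset.mem_filter.2 ⟨ha', ha⟩) hdvd
  calc (countIn (setOfMultiples A) x : ℝ)
      ≤ ∑ a ∈ s, (countIn {n | a ∣ n} x : ℝ) := by
        exact_mod_cast (countIn_mono hcover).trans (countIn_biUnion_le s _ x)
    _ ≤ ∑ a ∈ s, x * (1 / a : ℝ) := by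
        gcongr with a
        rw [countIn_dvd, mul_one_div]
        exact Nat.cast_div_le
    _ = x * ∑ a ∈ s, (1 / a : ℝ) := (Finset.mul_sum ..).symm
    _ ≤ x * recipSum A := by
        gcongr
        exact hA.sum_one_div_le_recipSum fun a ha => (Finset.mem_filter.1 ha).2

lemma setOfMultiples_mono (h : A ⊆ B) : setOfMultiples A ⊆ setOfMultiples B :=
  fun _ ⟨hn, a, ha, hdvd⟩ => ⟨hn, a, h ha, hdvd⟩

lemma setOfMultiples_union (A B : Set ℕ) :
    setOfMultiples (A ∪ B) = setOfMultiples A ∪ setOfMultiples B := by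
  ext n
  simp only [setOfMultiples, Set.mem_union, Set.mem_ofPred_eq, or_and_right, exists_or, and_or_left]

lemma Thin.countIn_setOfMultiples_le_add (hA : Thin A) (B : Set ℕ) (x : ℕ) :
    (countIn (setOfMultiples A) x : ℝ) ≤
      countIn (setOfMultiples (A ∩ B)) x + x * recipSum (A \ B) := by
  have hsplit : countIn (setOfMultiples A) x ≤
      countIn (setOfMultiples (A ∩ B)) x + countIn (setOfMultiples (A \ B)) x := by
    rw [← countIn_union_add_countIn_inter, ← setOfMultiples_union, Set.inter_union_sdiff]
    exact Nat.le_add_right _ _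
  calc (countIn (setOfMultiples A) x : ℝ)
      ≤ countIn (setOfMultiples (A ∩ B)) x + countIn (setOfMultiples (A \ B)) x := by
        exact_mod_cast hsplit
    _ ≤ _ := by
        gcongr
        exact (hA.mono Set.sdiff_subset).countIn_setOfMultiples_le x

lemma exists_hasDensity_setOfMultiples_of_finite (hA : A.Finite) :
    ∃ δ, HasDensity (setOfMultiples A) δ := by
  obtain ⟨N, hN⟩ := hA.bddAbove
  refine ⟨_, hasDensity_of_periodic N.factorial_pos fun n hn => ?_⟩
  refine and_congr (by simp [hn]) (exists_congr fun a => and_congr_right fun ha => ?_)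
  rcases a.eq_zero_or_pos with rfl | ha0
  · simp [hn.ne']
  · exact Nat.dvd_add_right (Nat.dvd_factorial ha0 (hN ha))

lemma Thin.tendstoUniformly_countIn_setOfMultiples (hA : Thin A) :
    TendstoUniformly (fun (s : Finset ℕ) (x : ℕ) => (countIn (setOfMultiples (A ∩ s)) x : ℝ) / x)
      (fun x : ℕ => (countIn (setOfMultiples A) x : ℝ) / x) atTop := by
  refine Metric.tendstoUniformly_iff.2 fun ε hε => ?_
  filter_upwards [(tendsto_recipSum_sdiff A).eventually_lt_const hε] with s hs x
  refine lt_of_le_of_lt ?_ hs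
  have hle : (countIn (setOfMultiples (A ∩ s)) x : ℝ) ≤ countIn (setOfMultiples A) x := by
    exact_mod_cast countIn_mono fun n _ hn => setOfMultiples_mono Set.inter_subset_left hn
  rw [Real.dist_eq, ← sub_div, abs_of_nonneg (div_nonneg (sub_nonneg.2 hle) x.cast_nonneg)]
  refine div_le_of_le_mul₀ x.cast_nonneg (recipSum_nonneg _) ?_
  linarith [hA.countIn_setOfMultiples_le_add s x]

lemma Thin.hasDensity_setOfMultiples (hA : Thin A) {d : Finset ℕ → ℝ}
    (hd : ∀ s : Finset ℕ, HasDensity (setOfMultiples (A ∩ s)) (d s))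
    (hδ : Tendsto d atTop (nhds δ)) : HasDensity (setOfMultiples A) δ :=
  hA.tendstoUniformly_countIn_setOfMultiples.tendstoUniformlyOnFilter.mono_right le_top
    |>.tendsto_of_eventually_tendsto (.of_forall hd) hδ

lemma HasDensity.setOfMultiples_le {F : Finset ℕ} (h : HasDensity (setOfMultiples F) δ)
    (hL : 1 < L) : δ ≤ 1 - (1 - ∑ a ∈ F with L.Coprime a, (1 : ℝ) / a) / L := by
  have hL0 : 0 < L := by lia
  have hclass : ∀ a ∈ F.filter L.Coprime,
      HasDensity ({n | n ≡ 1 [MOD L]} ∩ {n | n ≡ 0 [MOD a]}) (1 / (L * a)) := fun a ha => by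
    have hcop : L.Coprime a := (Finset.mem_filter.1 ha).2
    have ha0 : a ≠ 0 := by
      rintro rfl
      exact hL.ne' ((Nat.coprime_zero_right L).1 hcop)
    exact hasDensity_modEq_inter_modEq hL0 (Nat.pos_of_ne_zero ha0) hcop 1 0
  have hcover : setOfMultiples F ∩ {n | n ≡ 1 [MOD L]} ⊆
      ⋃ a ∈ F.filter L.Coprime, {n | n ≡ 1 [MOD L]} ∩ {n | n ≡ 0 [MOD a]} := by
    rintro n ⟨⟨-, a, ha, hdvd⟩, hn⟩
    have hcop : L.Coprime a := (Nat.Coprime.of_dvd_left hdvd (hn.gcd_eq.trans (by simp))).symm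
    exact Set.mem_biUnion (Finset.mem_filter.2 ⟨ha, hcop⟩) ⟨hn, Nat.modEq_zero_iff_dvd.2 hdvd⟩
  have hle := h.add_le_one_add_sum (hasDensity_modEq hL0 1) hclass hcover
  have hsum : ∑ a ∈ F with L.Coprime a, (1 : ℝ) / (L * a) =
      (∑ a ∈ F with L.Coprime a, (1 : ℝ) / a) / L := by
    rw [Finset.sum_div]
    exact Finset.sum_congr rfl fun a _ => by rw [div_div, mul_comm]
  rw [hsum] at hle
  rw [sub_div]
  linarith

lemma HasDensity.setOfMultiples_inter_le {s : Finset ℕ} (h : HasDensity (setOfMultiples (A ∩ s)) δ)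
    (hA : Thin A) (hL : 1 < L) : δ ≤ 1 - (1 - recipSum {a ∈ A | L.Coprime a}) / L := by
  classical
  have hF : A ∩ s = ({a ∈ s | a ∈ A} : Finset ℕ) := by
    ext
    simp [and_comm]
  rw [hF] at h
  refine (h.setOfMultiples_le hL).trans ?_
  gcongr
  refine (hA.mono (Set.sep_subset A _)).sum_one_div_le_recipSum fun a ha => ?_
  simp only [Finset.mem_coe, Finset.mem_filter] at ha
  exact ⟨ha.1.2, ha.2⟩

lemma Thin.exists_recipSum_coprime_lt_one (hA : Thin A) (h1 : 1 ∉ A) :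
    ∃ L > 1, recipSum {a ∈ A | L.Coprime a} < 1 := by
  obtain ⟨s, hs⟩ := ((tendsto_recipSum_sdiff A).eventually_lt_const one_pos).exists
  set N := s.sup id + 2
  have hN : 1 < N.factorial := Nat.one_lt_factorial.2 (by lia)
  refine ⟨N.factorial, hN, (Thin.recipSum_mono (hA.mono Set.sdiff_subset) ?_).trans_lt hs⟩
  rintro a ⟨ha, hcop⟩
  refine ⟨ha, fun has => ?_⟩
  have ha0 : a ≠ 0 := by
    rintro rfl
    exact hN.ne' ((Nat.coprime_zero_right _).1 hcop)
  have haN : a ≤ N := (Finset.le_sup (f := id) has).trans (Nat.le_add_right _ 2)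
  have ha1 : a = 1 := hcop.symm.eq_one_of_dvd (Nat.dvd_factorial (Nat.pos_of_ne_zero ha0) haN)
  exact h1 (ha1 ▸ ha)

/-- If `A` is thin and `1 ∉ A`, then the set of multiples of `A` has an asymptotic
density which is strictly less than `1`. -/
theorem thin_setOfMultiples_density_lt_one (A : Set ℕ) (hA : Thin A) (h1 : 1 ∉ A) :
    ∃ δ : ℝ, HasDensity (setOfMultiples A) δ ∧ δ < 1 := by
  choose d hd using fun s : Finset ℕ =>
    exists_hasDensity_setOfMultiples_of_finite (s.finite_toSet.inter_of_right A)
  obtain ⟨L, hL, hσ⟩ := hA.exists_recipSum_coprime_lt_one h1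
  set σ := recipSum {a ∈ A | L.Coprime a}
  have hd_mono : Monotone d := fun s t hst =>
    (hd s).mono (hd t) (setOfMultiples_mono (Set.inter_subset_inter_right A hst))
  have hd_le (s : Finset ℕ) : d s ≤ 1 - (1 - σ) / L :=
    (hd s).setOfMultiples_inter_le hA hL
  have hbdd : BddAbove (Set.range d) := ⟨_, Set.forall_mem_range.2 hd_le⟩
  refine ⟨_, hA.hasDensity_setOfMultiples hd (tendsto_atTop_ciSup hd_mono hbdd), ?_⟩
  refine (ciSup_le hd_le).trans_lt (sub_lt_self 1 (div_pos (sub_pos.2 hσ) ?_))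
  exact_mod_cast zero_lt_one.trans hL
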